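/- Let q ≥ 1, 2 ≤ s ≤ q+1, and n ≥ 1. Then the maximum number of s-cliques in a K_{q+1}-free simple graph on n vertices equals t_s(n,q), the number of s-cliques of the balanced complete q-partite Turán graph on n vertices. That is, ex(n, K_s, K_{q+1}) = t_s(n,q). -/

import Mathlib

/-- The `i`-th balanced part size of a partition of `n` into `q` parts. -/
def balancedPart (n q : ℕ) (i : Fin q) : ℕ :=
  n / q + if (i : ℕ) < n % q then 1 else 0

/-- `t_s(n,q) = ∑_{S ⊆ [q], |S| = s} ∏_{i ∈ S} n_i`, the number of `s`-cliques of
the balanced complete `q`-partite Turán graph on `n` vertices. -/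
def turanNum (n q s : ℕ) : ℕ :=
  ∑ S ∈ (Finset.univ : Finset (Fin q)).powersetCard s, ∏ i ∈ S, balancedPart n q i

namespace ZykovAux

/-- The multiset of balanced part sizes. -/
def bal (n q : ℕ) : Multiset ℕ := (Finset.univ : Finset (Fin q)).val.map (balancedPart n q)

lemma turanNum_eq (n q s : ℕ) : turanNum n q s = (bal n q).esymm s := by
  rw [bal, Finset.esymm_map_val]; rfl

lemma esymm_cons (a : ℕ) (M : Multiset ℕ) (s : ℕ) :
    (a ::ₘ M).esymm (s + 1) = M.esymm (s + 1) + a * M.esymm s := by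
  simp [Multiset.esymm, Multiset.powersetCard_cons, Multiset.sum_map_mul_left]

lemma esymm_nil_zero (M : Multiset ℕ) : M.esymm 0 = 1 := by
  simp [Multiset.esymm]

lemma card_bal (n q : ℕ) : (bal n q).card = q := by simp [bal]

lemma sum_bal (n q : ℕ) (hq : 0 < q) : (bal n q).sum = n := by
  have h1 : (bal n q).sum = ∑ i : Fin q, balancedPart n q i := rfl
  rw [h1]
  unfold balancedPart
  rw [Finset.sum_add_distrib, Fin.sum_univ_eq_sum_range (fun i => if i < n % q then 1 else 0) q]
  rw [← Finset.card_filter]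
  have : (Finset.range q).filter (fun i => i < n % q) = Finset.range (n % q) := by
    ext i; simp; intro h; exact h.trans (Nat.mod_lt _ hq)
  rw [this]; simp [Nat.div_add_mod]

lemma close_bal (n q : ℕ) : ∀ x ∈ bal n q, ∀ y ∈ bal n q, x ≤ y + 1 := by
  intro x hx y hy
  simp only [bal, Multiset.mem_map] at hx hy
  obtain ⟨i, -, rfl⟩ := hx
  obtain ⟨j, -, rfl⟩ := hy
  unfold balancedPart
  split_ifs <;> omega

lemma close_eq (M : Multiset ℕ) (hM : 0 < M.card) (h : ∀ x ∈ M, ∀ y ∈ M, x ≤ y + 1) :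
    M = Multiset.replicate (M.sum % M.card) (M.sum / M.card + 1) +
      Multiset.replicate (M.card - M.sum % M.card) (M.sum / M.card) := by
  obtain ⟨d, hd, hmin⟩ : ∃ d ∈ M, ∀ y ∈ M, d ≤ y := by
    obtain ⟨x, hx⟩ := Multiset.card_pos_iff_exists_mem.mp hM
    obtain ⟨d, hd, h⟩ := Finset.exists_min_image M.toFinset id ⟨x, by simpa using hx⟩
    exact ⟨d, by simpa using hd, fun y hy => h y (by simpa using hy)⟩
  have h1 : M.filter (fun x => x ≠ d) =
      Multiset.replicate (M.filter (fun x => x ≠ d)).card (d + 1) := by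
    rw [Multiset.eq_replicate]
    refine ⟨rfl, fun b hb => ?_⟩
    rw [Multiset.mem_filter] at hb
    have := h b hb.1 d hd
    have := hmin b hb.1
    omega
  have h2 : M.filter (fun x => x = d) =
      Multiset.replicate (M.filter (fun x => x = d)).card d := by
    rw [Multiset.eq_replicate]
    exact ⟨rfl, fun b hb => (Multiset.mem_filter.mp hb).2⟩
  have h3 := Multiset.filter_add_not (fun x => x = d) M
  have hk : 0 < (M.filter (fun x => x = d)).card :=
    Multiset.card_pos_iff_exists_mem.mpr ⟨d, by simp [hd]⟩
  generalize (M.filter (fun x => x = d)).card = k at h2 hk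
  change M.filter (fun x => x = d) + M.filter (fun x => x ≠ d) = M at h3
  generalize (M.filter (fun x => x ≠ d)).card = l at h1
  rw [h1, h2] at h3
  subst h3
  have e1 : (Multiset.replicate k d + Multiset.replicate l (d + 1)).card = k + l := by simp
  have e2 : (Multiset.replicate k d + Multiset.replicate l (d + 1)).sum = l + (k + l) * d := by
    simp; ring
  rw [e1, e2, Nat.add_mul_mod_self_left, Nat.add_mul_div_left _ _ (by omega),
    Nat.mod_eq_of_lt (by omega), Nat.div_eq_of_lt (by omega)]
  rw [add_comm]; simp

lemma esymm_le_bal (s : ℕ) : ∀ (N : ℕ) (M : Multiset ℕ), (M.map (fun x => x ^ 2)).sum = N →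
    0 < M.card → M.esymm s ≤ (bal M.sum M.card).esymm s := by
  intro N
  induction N using Nat.strong_induction_on with
  | _ N ih =>
  intro M hN hM
  by_cases h : ∀ x ∈ M, ∀ y ∈ M, x ≤ y + 1
  · have h1 := close_eq M hM h
    have h2 := close_eq (bal M.sum M.card) (by rwa [card_bal]) (close_bal _ _)
    rw [card_bal, sum_bal _ _ hM, ← h1] at h2
    rw [h2]
  · push Not at h
    obtain ⟨x, hx, y, hy, hxy⟩ := h
    obtain ⟨R, rfl⟩ := Multiset.exists_cons_of_mem hx
    have hy' : y ∈ R := by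
      rcases Multiset.mem_cons.mp hy with h | h
      · omega
      · exact h
    obtain ⟨R, rfl⟩ := Multiset.exists_cons_of_mem hy'
    obtain ⟨z, rfl⟩ : ∃ z, x = y + 2 + z := ⟨x - (y + 2), by omega⟩
    have key := ih _ ?_ ((y + 1 + z) ::ₘ (y + 1) ::ₘ R) rfl (by simp)
    · have e1 : ((y + 1 + z) ::ₘ (y + 1) ::ₘ R).sum = ((y + 2 + z) ::ₘ y ::ₘ R).sum := by
        simp; ring
      have e2 : ((y + 1 + z) ::ₘ (y + 1) ::ₘ R).card = ((y + 2 + z) ::ₘ y ::ₘ R).card := by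
        simp
      rw [e1, e2] at key
      refine le_trans ?_ key
      rcases s with _ | _ | s
      · simp [esymm_nil_zero]
      · simp only [esymm_cons, esymm_nil_zero]; omega
      · simp only [esymm_cons]
        nlinarith [Nat.zero_le ((z + 1) * R.esymm s)]
    · rw [← hN]; simp; nlinarith

open Finset in
lemma clique_bound {V : Type*} [DecidableEq V] (G : SimpleGraph V) [DecidableRel G.Adj] (q : ℕ) :
    ∀ (U : Finset V) (s : ℕ), G.CliqueFreeOn U (q + 1) →
      #{t ∈ U.powersetCard s | G.IsClique (↑(t : Finset V) : Set V)} ≤ (bal #U q).esymm s := by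
  classical
  induction q with
  | zero =>
    intro U s hU
    have hU0 : U = ∅ := by
      rw [Finset.eq_empty_iff_forall_notMem]
      intro v hv
      exact hU (t := {v}) (by simpa using hv) (by simp [SimpleGraph.isNClique_iff])
    subst hU0
    rcases s with _ | s
    · rw [esymm_nil_zero]
      exact (card_filter_le _ _).trans (by simp)
    · refine (card_filter_le _ _).trans ?_
      simp
  | succ q ih =>
    intro U s hU
    rcases s with _ | s
    · rw [esymm_nil_zero]
      exact (card_filter_le _ _).trans (by simp)
    rcases U.eq_empty_or_nonempty with rfl | hne
    · refine (card_filter_le _ _).trans ?_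
      simp
    let k : V → ℕ := fun v => #{t ∈ U.powersetCard (s + 1) | G.IsClique (↑(t : Finset V) : Set V) ∧ v ∈ t}
    obtain ⟨v, hv, hmax⟩ := Finset.exists_max_image U k hne
    set N := U.filter (G.Adj v) with hNdef
    have hN : G.CliqueFreeOn N (q + 1) := by
      have := SimpleGraph.CliqueFreeOn.of_succ G hU (a := v) (by simpa using hv)
      convert this using 1
      ext w; simp [N]
    have hk : k v ≤ #{t ∈ N.powersetCard s | G.IsClique (↑(t : Finset V) : Set V)} := by
      apply Finset.card_le_card_of_injOn (fun t => t.erase v)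
      · intro t ht
        simp only [coe_filter, mem_powersetCard, Set.mem_ofPred_eq] at ht ⊢
        obtain ⟨⟨h1, h2⟩, h3, h4⟩ := ht
        refine ⟨⟨?_, ?_⟩, ?_⟩
        · intro w hw
          rw [mem_erase] at hw
          rw [hNdef, mem_filter]
          exact ⟨h1 hw.2, h3 h4 hw.2 (Ne.symm hw.1)⟩
        · rw [card_erase_of_mem h4]; omega
        · exact h3.subset (by simp)
      · intro t ht t' ht' he
        simp only [coe_filter, Set.mem_ofPred_eq] at ht ht'
        have he : t.erase v = t'.erase v := he
        rw [← insert_erase ht.2.2, he, insert_erase ht'.2.2]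
    have hsplit : #{t ∈ U.powersetCard (s + 1) | G.IsClique (↑(t : Finset V) : Set V)} ≤
        #{t ∈ N.powersetCard (s + 1) | G.IsClique (↑(t : Finset V) : Set V)} + ∑ u ∈ U \ N, k u := by
      refine le_trans (card_le_card (t := {t ∈ N.powersetCard (s + 1) | G.IsClique (↑(t : Finset V) : Set V)} ∪
        (U \ N).biUnion fun u =>
          {t ∈ U.powersetCard (s + 1) | G.IsClique (↑(t : Finset V) : Set V) ∧ u ∈ t}) ?_) ?_
      · intro t ht
        rw [mem_filter, mem_powersetCard] at ht
        by_cases hc : t ⊆ N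
        · apply mem_union_left
          rw [mem_filter, mem_powersetCard]
          exact ⟨⟨hc, ht.1.2⟩, ht.2⟩
        · apply mem_union_right
          obtain ⟨u, hu, huN⟩ := not_subset.mp hc
          rw [mem_biUnion]
          refine ⟨u, mem_sdiff.mpr ⟨ht.1.1 hu, huN⟩, ?_⟩
          rw [mem_filter, mem_powersetCard]
          exact ⟨ht.1, ht.2, hu⟩
      · exact (card_union_le _ _).trans (Nat.add_le_add_left card_biUnion_le _)
    have hsum : ∑ u ∈ U \ N, k u ≤ #(U \ N) * (bal #N q).esymm s := by
      rw [← smul_eq_mul]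
      apply Finset.sum_le_card_nsmul
      intro u hu
      exact (hmax u (mem_sdiff.mp hu).1).trans (hk.trans (ih N s hN))
    have h1 := ih N (s + 1) hN
    have hsub : N ⊆ U := filter_subset _ _
    have hcard : #(U \ N) + #N = #U := card_sdiff_add_card_eq_card hsub
    have h2 := esymm_le_bal (s + 1) _ (#(U \ N) ::ₘ bal #N q) rfl (by simp)
    have h3 : (bal #N q).sum = #N := by
      rcases Nat.eq_zero_or_pos q with rfl | hq
      · have : N = ∅ := by
          rw [Finset.eq_empty_iff_forall_notMem]
          intro v hv
          exact hN (t := {v}) (by simpa using hv) (by simp [SimpleGraph.isNClique_iff])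
        simp [this, bal]
      · exact sum_bal _ _ hq
    rw [esymm_cons, Multiset.sum_cons, Multiset.card_cons, card_bal, h3, hcard] at h2
    omega

open Finset in
lemma rainbow_le {V : Type*} [Fintype V] [DecidableEq V] {q : ℕ} (c : V → Fin q) (s : ℕ)
    (G : SimpleGraph V) (hG : ∀ v w, c v ≠ c w → G.Adj v w) :
    ∑ S ∈ (univ : Finset (Fin q)).powersetCard s, ∏ i ∈ S, #{v | c v = i} ≤
      {t : Finset V | G.IsNClique s t}.ncard := by
  classical
  have hr : {t : Finset V | G.IsNClique s t}.ncard = #{t : Finset V | G.IsNClique s t} := by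
    rw [← Set.ncard_coe_finset]; simp
  have hl : ∑ S ∈ (univ : Finset (Fin q)).powersetCard s, ∏ i ∈ S, #{v | c v = i} =
      #(((univ : Finset (Fin q)).powersetCard s).sigma
        fun S => S.pi fun i => ({v | c v = i} : Finset V)) := by
    rw [card_sigma]; simp [Finset.card_pi]
  rw [hl, hr]
  have hc : ∀ (S : Finset (Fin q)) (f : ∀ i ∈ S, V),
      f ∈ S.pi (fun i => ({v | c v = i} : Finset V)) → ∀ i hi, c (f i hi) = i := by
    intro S f hf i hi
    simpa using mem_pi.mp hf i hi
  apply card_le_card_of_injOn (fun p => p.1.attach.image fun i => p.2 i.1 i.2)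
  · rintro ⟨S, f⟩ hp
    rw [mem_coe, mem_sigma, mem_powersetCard] at hp
    obtain ⟨⟨-, hS⟩, hf⟩ := hp
    have hf := hc S f hf
    simp only [coe_filter, mem_univ, true_and, Set.mem_ofPred_eq]
    refine ⟨?_, ?_⟩
    · intro x hx y hy hxy
      simp only [coe_image, Set.mem_image] at hx hy
      obtain ⟨i, -, rfl⟩ := hx
      obtain ⟨j, -, rfl⟩ := hy
      apply hG
      rw [hf, hf]
      intro h
      exact hxy (by rw [Subtype.ext h])
    · rw [card_image_of_injective, card_attach]
      · exact hS
      · intro i j hij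
        apply Subtype.ext
        have := congrArg c hij
        simpa [hf] using this
  · rintro ⟨S, f⟩ hp ⟨S', f'⟩ hp' he
    rw [mem_coe, mem_sigma, mem_powersetCard] at hp hp'
    have hf := hc S f hp.2
    have hf' := hc S' f' hp'.2
    have himg : ∀ (T : Finset (Fin q)) (g : ∀ i ∈ T, V), (∀ i hi, c (g i hi) = i) →
        (T.attach.image fun i => g i.1 i.2).image c = T := by
      intro T g hg
      ext i
      simp [hg]
    have he : (S.attach.image fun i => f i.1 i.2) = (S'.attach.image fun i => f' i.1 i.2) := he
    have hSS : S = S' := by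
      rw [← himg S f hf, he, himg S' f' hf']
    subst hSS
    congr 1
    funext i hi
    have hm : f i hi ∈ (S.attach.image fun i => f' i.1 i.2) := by
      rw [← he]
      exact mem_image.mpr ⟨⟨i, hi⟩, mem_attach _ _, rfl⟩
    obtain ⟨j, -, hj⟩ := mem_image.mp hm
    have hji : j.1 = i := by
      have := congrArg c hj
      simpa [hf, hf'] using this
    obtain ⟨j, hj'⟩ := j
    subst hji
    exact hj.symm

lemma fiber_card (n q : ℕ) (hq : 0 < q) (i : Fin q) :
    (Finset.univ.filter fun v : Fin n => (⟨v % q, Nat.mod_lt _ hq⟩ : Fin q) = i).card =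
      balancedPart n q i := by
  have h := Nat.count_modEq_card n hq (i : ℕ)
  rw [Nat.mod_eq_of_lt i.2] at h
  rw [balancedPart, ← h, Nat.count_eq_card_filter_range, Finset.card_filter, Finset.card_filter,
    ← Fin.sum_univ_eq_sum_range (fun v => if v ≡ i [MOD q] then 1 else 0) n]
  refine Finset.sum_congr rfl fun v _ => ?_
  simp [Fin.ext_iff, Nat.ModEq, Nat.mod_eq_of_lt i.2]

end ZykovAux

theorem max_cliques_Kqq_free (n q s : ℕ) (hq : 1 ≤ q) (hs : 2 ≤ s)
    (hsq : s ≤ q + 1) (hn : 1 ≤ n) :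
    IsGreatest
      {m | ∃ G : SimpleGraph (Fin n), G.CliqueFree (q + 1) ∧
        m = {t : Finset (Fin n) | G.IsNClique s t}.ncard}
      (turanNum n q s) := by
  classical
  have upper : ∀ G : SimpleGraph (Fin n), G.CliqueFree (q + 1) →
      {t : Finset (Fin n) | G.IsNClique s t}.ncard ≤ turanNum n q s := by
    intro G hG
    have h := ZykovAux.clique_bound G q Finset.univ s hG.cliqueFreeOn
    rw [Finset.card_univ, Fintype.card_fin, ← ZykovAux.turanNum_eq] at h
    refine le_trans (le_of_eq ?_) h
    rw [← Set.ncard_coe_finset]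
    congr 1
    ext t
    simp [SimpleGraph.isNClique_iff, and_comm]
  constructor
  · have hfree := SimpleGraph.turanGraph_cliqueFree (n := n) (r := q) hq
    refine ⟨SimpleGraph.turanGraph n q, hfree, le_antisymm ?_ (upper _ hfree)⟩
    have h := ZykovAux.rainbow_le (fun v : Fin n => (⟨v % q, Nat.mod_lt _ hq⟩ : Fin q)) s
      (SimpleGraph.turanGraph n q) (by
        intro v w h
        rw [SimpleGraph.turanGraph_adj]
        simpa [Fin.ext_iff] using h)
    refine le_trans (le_of_eq ?_) h
    unfold turanNum
    refine Finset.sum_congr rfl fun S _ => Finset.prod_congr rfl fun i _ => ?_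
    rw [ZykovAux.fiber_card n q hq i]
  · rintro m ⟨G, hG, rfl⟩
    exact upper G hG
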